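/- Let (t, n, b) be a smooth right-handed orthonormal frame on an open set U ⊆ ℝ³, let μ be a smooth scalar function on U, and suppose J = n + μb satisfies the Jacobi identity J·(curl J) = 0 on U. Then for every point x₀ ∈ U there exist an open neighborhood V ⊆ U of x₀ and smooth functions φ, H : V → ℝ with φ nowhere zero on V such that J = φ ∇H on V. -/

import Mathlib

/-!
The condition `J · curl J = 0` is the Frobenius condition `α ∧ dα = 0` for the one-form `α = J♭`,
so the theorem is the local Frobenius theorem for a nowhere vanishing one-form. Choose `e` with
`α(e) ≠ 0` at `x₀` and divide `α` by `α(e)` to obtain `γ` with `γ(e) = 1`. In the plane through `x`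
and the axis `x₀ + ℝ e`, follow the curve `C` tangent to `ker γ` from `x` to the axis; the potential
`H x` is the axis coordinate of its endpoint. If `X` is the variation of `C` when `x` moves in the
direction `h`, then `w = γ(X)` satisfies the linear equation `w' = -dγ(e, C') w`, so its final value
`dH(h)` is a nonzero multiple, independent of `h`, of its initial value `γ(h)`.

The displacement `u = C - x` solves an integral equation in `C([0, 1], E)` which at `x = x₀` reads
`u = 0`, so the implicit function theorem gives `C` as a smooth function of `x`.
-/

noncomputable section

/-- Three-dimensional Euclidean space. -/
abbrev E3 : Type := EuclideanSpace ℝ (Fin 3)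

/-- The Euclidean dot product on ℝ³. -/
def dot (u v : E3) : ℝ := ∑ i, u i * v i

/-- The cross product on ℝ³. -/
def cross (u v : E3) : E3 :=
  (WithLp.equiv 2 (Fin 3 → ℝ)).symm
    ![u 1 * v 2 - u 2 * v 1, u 2 * v 0 - u 0 * v 2, u 0 * v 1 - u 1 * v 0]

/-- Partial derivative of a scalar function in the `i`-th coordinate direction. -/
def pd (i : Fin 3) (f : E3 → ℝ) (x : E3) : ℝ :=
  fderiv ℝ f x (EuclideanSpace.single i 1)

/-- The gradient ∇f of a scalar function. -/
def grad (f : E3 → ℝ) (x : E3) : E3 :=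
  (WithLp.equiv 2 (Fin 3 → ℝ)).symm ![pd 0 f x, pd 1 f x, pd 2 f x]

/-- The curl ∇×F of a vector field. -/
def curl (F : E3 → E3) (x : E3) : E3 :=
  (WithLp.equiv 2 (Fin 3 → ℝ)).symm
    ![pd 1 (fun y => F y 2) x - pd 2 (fun y => F y 1) x,
      pd 2 (fun y => F y 0) x - pd 0 (fun y => F y 2) x,
      pd 0 (fun y => F y 1) x - pd 1 (fun y => F y 0) x]

/-- Directional derivative ∂ₛ f = t·∇f of a scalar function along a vector field t. -/
def ds (t : E3 → E3) (f : E3 → ℝ) (x : E3) : ℝ := dot (t x) (grad f x)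

/-- Componentwise directional derivative (u·∇)w of a vector field w along u. -/
def dirDeriv (u w : E3 → E3) (x : E3) : E3 :=
  (WithLp.equiv 2 (Fin 3 → ℝ)).symm
    ![fderiv ℝ (fun y => w y 0) x (u x),
      fderiv ℝ (fun y => w y 1) x (u x),
      fderiv ℝ (fun y => w y 2) x (u x)]

/-- Helicity density w·(curl w) of a vector field. -/
def hel (w : E3 → E3) (x : E3) : ℝ := dot (w x) (curl w x)

/-- Cross-helicity sum n·(curl b) + b·(curl n). -/
def crossHel (n b : E3 → E3) (x : E3) : ℝ :=
  dot (n x) (curl b x) + dot (b x) (curl n x)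

/-- A smooth right-handed orthonormal (Serret–Frenet type) frame on U. -/
def IsFrameOn (t n b : E3 → E3) (U : Set E3) : Prop :=
  ContDiffOn ℝ (⊤ : ℕ∞) t U ∧ ContDiffOn ℝ (⊤ : ℕ∞) n U ∧ ContDiffOn ℝ (⊤ : ℕ∞) b U ∧
  ∀ x ∈ U, ‖t x‖ = 1 ∧ ‖n x‖ = 1 ∧ ‖b x‖ = 1 ∧
    dot (t x) (n x) = 0 ∧ dot (t x) (b x) = 0 ∧ dot (n x) (b x) = 0 ∧
    b x = cross (t x) (n x)

open Set Filter Topology intervalIntegral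
open scoped ContDiff unitInterval

universe u v

section Superposition

variable {K : Type*} [TopologicalSpace K] [CompactSpace K]

section PointwiseApply

variable {F G : Type*} [NormedAddCommGroup F] [NormedSpace ℝ F] [NormedAddCommGroup G]
  [NormedSpace ℝ G]

/-- The operator `(A, u) ↦ (s ↦ A s (u s))` that pairs a continuous family of operators with a
continuous map, bundled as a continuous bilinear map. It expresses the derivative of a
superposition operator `u ↦ g ∘ u`. -/
def pointwiseApply : C(K, F →L[ℝ] G) →L[ℝ] C(K, F) →L[ℝ] C(K, G) :=
  LinearMap.mkContinuous₂
    (LinearMap.mk₂ ℝ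
      (fun (A : C(K, F →L[ℝ] G)) (u : C(K, F)) =>
        (⟨fun s => A s (u s), A.continuous.clm_apply u.continuous⟩ : C(K, G)))
      (fun A B u => by ext s; simp) (fun c A u => by ext s; simp)
      (fun A u v => by ext s; simp) (fun c A u => by ext s; simp)) 1
    fun A u => by
      rw [one_mul, ContinuousMap.norm_le _ (by positivity)]
      exact fun s => (A s).le_of_opNorm_le_of_le (A.norm_coe_le_norm s) (u.norm_coe_le_norm s)

@[simp]
lemma pointwiseApply_apply (A : C(K, F →L[ℝ] G)) (u : C(K, F)) (s : K) :
    pointwiseApply A u s = A s (u s) :=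
  rfl

lemma hasFDerivAt_postcomp {g : C(F, G)} {g' : C(F, F →L[ℝ] G)}
    (hg : ∀ x, HasFDerivAt g (g' x) x) (u : C(K, F)) :
    HasFDerivAt g.comp (pointwiseApply (g'.comp u)) u := by
  rw [hasFDerivAt_iff_isLittleO_nhds_zero, Asymptotics.isLittleO_iff]
  intro ε hε
  obtain ⟨δ, hδ, hball⟩ : ∃ δ > 0, ∀ s, ∀ z ∈ Metric.ball (u s) δ, ‖g' z - g' (u s)‖ ≤ ε := by
    obtain ⟨δ, hδ, hδε⟩ := Metric.mem_uniformity_dist.1 <|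
      (isCompact_range u.continuous).uniformContinuousAt_of_continuousAt g'
        (fun x _ => g'.continuous.continuousAt) (Metric.dist_mem_uniformity hε)
    refine ⟨δ, hδ, fun s z hz => ?_⟩
    rw [← dist_eq_norm, dist_comm]
    exact (hδε (Metric.mem_ball'.1 hz) (mem_range_self s)).le
  filter_upwards [Metric.ball_mem_nhds (0 : C(K, F)) hδ] with h hh
  rw [ContinuousMap.norm_le _ (by positivity)]
  intro s
  have hhs : u s + h s ∈ Metric.ball (u s) δ := by
    simpa using (h.norm_coe_le_norm s).trans_lt (by simpa using hh)
  have hmean := (convex_ball (u s) δ).norm_image_sub_le_of_norm_hasFDerivWithin_le'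
    (fun z _ => (hg z).hasFDerivWithinAt) (hball s)
    (Metric.mem_ball_self hδ) hhs
  calc ‖(g.comp (u + h) - g.comp u - pointwiseApply (g'.comp u) h) s‖ ≤ ε * ‖h s‖ := by
        simpa using hmean
    _ ≤ ε * ‖h‖ := by gcongr; exact h.norm_coe_le_norm s

end PointwiseApply

lemma contDiff_postcomp_nat {F : Type u} [NormedAddCommGroup F] [NormedSpace ℝ F] (n : ℕ) :
    ∀ {G : Type max u v} [NormedAddCommGroup G] [NormedSpace ℝ G] {g : C(F, G)},
      ContDiff ℝ n g → ContDiff ℝ n (g.comp : C(K, F) → C(K, G)) := by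
  induction n with
  | zero => exact fun _ => contDiff_zero.2 (ContinuousMap.continuous_postcomp _)
  | succ n ih =>
    intro G _ _ g hg
    let g' : C(F, F →L[ℝ] G) := ⟨fderiv ℝ g, hg.continuous_fderiv (by simp)⟩
    have hg' : ContDiff ℝ n g' := hg.fderiv_right le_rfl
    have hgg' : ∀ x, HasFDerivAt g (g' x) x := fun x =>
      (hg.differentiable (by simp) x).hasFDerivAt
    exact contDiff_succ_iff_hasFDerivAt.2
      ⟨_, (pointwiseApply (K := K)).contDiff.comp (ih hg'), hasFDerivAt_postcomp hgg'⟩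

lemma contDiff_postcomp {F : Type u} [NormedAddCommGroup F] [NormedSpace ℝ F]
    {G : Type v} [NormedAddCommGroup G] [NormedSpace ℝ G] {n : ℕ∞} {g : C(F, G)}
    (hg : ContDiff ℝ n g) : ContDiff ℝ n (g.comp : C(K, F) → C(K, G)) := by
  refine contDiff_iff_forall_nat_le.2 fun m hm => ?_
  -- The induction needs a codomain whose universe contains that of `F →L[ℝ] G`.
  let up : G ≃L[ℝ] ULift.{u} G := ContinuousLinearEquiv.ulift.symm
  have hlift : ContDiff ℝ m ((up : C(G, ULift.{u} G)).comp g) :=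
    up.contDiff.comp (hg.of_le (by exact_mod_cast hm))
  exact ((up.symm : ULift.{u} G →L[ℝ] G).compLeftContinuous ℝ K).contDiff.comp
    (contDiff_postcomp_nat.{u, v} m hlift)

end Superposition

section Volterra

lemma continuous_IccExtend_unitInterval {Y : Type*} [TopologicalSpace Y] (u : C(I, Y)) :
    Continuous (IccExtend (zero_le_one (α := ℝ)) u) :=
  u.continuous.Icc_extend'

variable {F : Type*} [NormedAddCommGroup F] [NormedSpace ℝ F]

/-- The Volterra operator `u ↦ (s ↦ ∫₀ˢ u)` on curves over the unit interval. The integrand is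
extended by constants outside `[0, 1]`, where its values do not matter. -/
def volterra : C(I, F) →L[ℝ] C(I, F) :=
  LinearMap.mkContinuous
    { toFun := fun u => ⟨fun s => ∫ τ in (0 : ℝ)..s, IccExtend zero_le_one u τ,
        (continuous_primitive
          (fun _ _ => (continuous_IccExtend_unitInterval u).intervalIntegrable _ _) 0).comp
          continuous_subtype_val⟩
      map_add' := fun u v => by
        ext s
        exact integral_add ((continuous_IccExtend_unitInterval u).intervalIntegrable _ _)
          ((continuous_IccExtend_unitInterval v).intervalIntegrable _ _)
      map_smul' := fun c u => by
        ext s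
        exact integral_smul c _ } 1
    fun u => by
      rw [one_mul, ContinuousMap.norm_le _ (by positivity)]
      intro s
      calc ‖∫ τ in (0 : ℝ)..s, IccExtend zero_le_one u τ‖ ≤ ‖u‖ * |(s : ℝ) - 0| :=
            norm_integral_le_of_norm_le_const fun τ _ => u.norm_coe_le_norm _
        _ ≤ ‖u‖ := by
            rw [sub_zero, abs_of_nonneg s.2.1]
            exact mul_le_of_le_one_right (norm_nonneg u) s.2.2

lemma volterra_apply (u : C(I, F)) (s : I) :
    volterra u s = ∫ τ in (0 : ℝ)..s, IccExtend zero_le_one u τ :=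
  rfl

lemma hasDerivWithinAt_of_volterra_eq [CompleteSpace F] {k u : C(I, F)} (hu : volterra k = u)
    {s : ℝ} (hs : s ∈ Icc (0 : ℝ) 1) :
    HasDerivWithinAt (IccExtend zero_le_one u) (k ⟨s, hs⟩) (Icc 0 1) s := by
  have hk := continuous_IccExtend_unitInterval k
  have hprim : HasDerivAt (fun s => ∫ τ in (0 : ℝ)..s, IccExtend zero_le_one k τ)
      (k ⟨s, hs⟩) s := by
    rw [← IccExtend_of_mem zero_le_one k hs]
    exact (hk.integral_hasStrictDerivAt 0 s).hasDerivAt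
  have hext : ∀ r ∈ Icc (0 : ℝ) 1, IccExtend zero_le_one u r =
      ∫ τ in (0 : ℝ)..r, IccExtend zero_le_one k τ := fun r hr => by
    rw [IccExtend_of_mem _ _ hr, ← hu, volterra_apply]
  exact hprim.hasDerivWithinAt.congr hext (hext s hs)

lemma apply_zero_of_volterra_eq {k u : C(I, F)} (hu : volterra k = u) : u 0 = 0 := by
  rw [← hu, volterra_apply, Icc.coe_zero, integral_same]

end Volterra

section ImplicitFunction

variable {𝕜 : Type*} [RCLike 𝕜]
  {E₁ : Type*} [NormedAddCommGroup E₁] [NormedSpace 𝕜 E₁] [CompleteSpace E₁]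
  {E₂ : Type*} [NormedAddCommGroup E₂] [NormedSpace 𝕜 E₂] [CompleteSpace E₂]
  {F : Type*} [NormedAddCommGroup F] [NormedSpace 𝕜 F] [CompleteSpace F] {n : ℕ∞ω}

/-- For `n = ∞` this is not a consequence of `ContDiffAt.contDiffAt_implicitFunction`, since being
`C^∞` at a point is not an open condition. -/
theorem eventually_contDiffAt_implicitFunction {f : E₁ × E₂ → F} {u : E₁ × E₂}
    (hf : ContDiff 𝕜 n f) (hn : n ≠ 0)
    (hu : (fderiv 𝕜 f u ∘L .inr 𝕜 E₁ E₂).IsInvertible) :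
    ∀ᶠ x in 𝓝 u.1, ContDiffAt 𝕜 n (hf.contDiffAt.implicitFunction hn hu) x := by
  set ψ := hf.contDiffAt.implicitFunction hn hu
  have hψn : ContDiffAt 𝕜 n ψ u.1 := hf.contDiffAt.contDiffAt_implicitFunction hn hu
  have hψu : ψ u.1 = u.2 := hf.contDiffAt.implicitFunction_apply_self hn hu
  have hcont : ∀ᶠ x in 𝓝 u.1, ContinuousAt ψ x :=
    ((hψn.of_le (ENat.one_le_iff_ne_zero_withTop.2 hn)).eventually (by simp)).mono
      fun x hx => hx.continuousAt
  have hinv : ∀ᶠ x in 𝓝 u.1, (fderiv 𝕜 f (x, ψ x) ∘L .inr 𝕜 E₁ E₂).IsInvertible := by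
    have : ContinuousAt (fun x => fderiv 𝕜 f (x, ψ x) ∘L .inr 𝕜 E₁ E₂) u.1 :=
      ((hf.continuous_fderiv hn).continuousAt.comp
        (continuousAt_id.prodMk hψn.continuousAt)).clm_comp continuousAt_const
    exact this.eventually (ContinuousLinearEquiv.isOpen.mem_nhds (by simp only [hψu]; exact hu))
  filter_upwards [hinv, hcont.eventually_nhds,
    (hf.contDiffAt.eventually_apply_implicitFunction hn hu).eventually_nhds] with x hxinv hxcont hx
  have hgraph : Tendsto (fun y => (y, ψ y)) (𝓝 x) (𝓝 (x, ψ x)) :=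
    (continuousAt_id.prodMk hxcont.self_of_nhds).tendsto
  refine (hf.contDiffAt.contDiffAt_implicitFunction hn hxinv).congr_of_eventuallyEq ?_
  filter_upwards [hx, hgraph.eventually
    (hf.contDiffAt.eventually_apply_eq_iff_implicitFunction hn hxinv)] with y hy hiff
  exact (hiff.1 (hy.trans hx.self_of_nhds.symm)).symm

lemma exists_contDiffAt_fixedPoint {Φ : E₁ × E₂ → E₂} (hΦ : ContDiff 𝕜 n Φ) (hn : n ≠ 0)
    {p₀ : E₁} {u₀ : E₂} (hp₀ : ∀ u, Φ (p₀, u) = u₀) :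
    ∃ S : E₁ → E₂, S p₀ = u₀ ∧
      ∀ᶠ p in 𝓝 p₀, ContDiffAt 𝕜 n S p ∧ Φ (p, S p) = S p := by
  let f : E₁ × E₂ → E₂ := fun v => v.2 - Φ v
  have hf : ContDiff 𝕜 n f := contDiff_snd.sub hΦ
  have hpartial : fderiv 𝕜 f (p₀, u₀) ∘L .inr 𝕜 E₁ E₂ = .id 𝕜 E₂ := by
    have hcomp : HasFDerivAt (fun u => f (p₀, u)) (fderiv 𝕜 f (p₀, u₀) ∘L .inr 𝕜 E₁ E₂) u₀ :=
      (hf.differentiable hn (p₀, u₀)).hasFDerivAt.comp u₀ (hasFDerivAt_prodMk_right p₀ u₀)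
    have hid : HasFDerivAt (fun u => f (p₀, u)) (.id 𝕜 E₂) u₀ := by
      simpa only [f, hp₀, id] using (hasFDerivAt_id (𝕜 := 𝕜) u₀).sub_const u₀
    exact hcomp.unique hid
  have hinv : (fderiv 𝕜 f (p₀, u₀) ∘L .inr 𝕜 E₁ E₂).IsInvertible :=
    ⟨.refl 𝕜 E₂, hpartial.symm⟩
  refine ⟨hf.contDiffAt.implicitFunction hn hinv,
    hf.contDiffAt.implicitFunction_apply_self hn hinv, ?_⟩
  filter_upwards [eventually_contDiffAt_implicitFunction hf hn hinv,
    hf.contDiffAt.eventually_apply_implicitFunction hn hinv] with p hp hfp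
  refine ⟨hp, (sub_eq_zero.1 ?_).symm⟩
  simpa [f, hp₀] using hfp

end ImplicitFunction

section ParametricODE

variable {P F : Type*} [NormedAddCommGroup P] [NormedSpace ℝ P]
  [NormedAddCommGroup F] [NormedSpace ℝ F]

/-- The curve `s ↦ (p, u s)` attached to a parameter `p` and a curve `u`, as a continuous linear
map in `(p, u)`. -/
def paramCurve (P F : Type*) [NormedAddCommGroup P] [NormedSpace ℝ P]
    [NormedAddCommGroup F] [NormedSpace ℝ F] : P × C(I, F) →L[ℝ] C(I, P × F) where
  toFun q := (ContinuousMap.const I q.1).prodMk q.2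
  map_add' _ _ := rfl
  map_smul' _ _ := rfl
  cont := by
    refine ContinuousMap.continuous_of_continuous_uncurry _ ?_
    change Continuous fun x : (P × C(I, F)) × I => (x.1.1, x.1.2 x.2)
    fun_prop

@[simp]
lemma paramCurve_apply (q : P × C(I, F)) (s : I) : paramCurve P F q s = (q.1, q.2 s) :=
  rfl

theorem exists_contDiffAt_ode_solution [CompleteSpace P] [CompleteSpace F] {n : ℕ∞}
    {f : C(P × F, F)} (hf : ContDiff ℝ n f) (hn : n ≠ 0) {p₀ : P} (hp₀ : ∀ u, f (p₀, u) = 0) :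
    ∃ S : P → C(I, F), S p₀ = 0 ∧ ∀ᶠ p in 𝓝 p₀,
      ContDiffAt ℝ n S p ∧ volterra (f.comp (paramCurve P F (p, S p))) = S p := by
  have hΦ : ContDiff ℝ n fun q => volterra (f.comp (paramCurve P F q)) :=
    (volterra (F := F)).contDiff.comp ((contDiff_postcomp hf).comp (paramCurve P F).contDiff)
  refine exists_contDiffAt_fixedPoint hΦ (by exact_mod_cast hn) fun u => ?_
  have : f.comp (paramCurve P F (p₀, u)) = 0 := by
    ext s
    simp [hp₀]
  rw [this, map_zero]

lemma fderiv_ode_solution {f : C(P × F, F)} {f' : C(P × F, P × F →L[ℝ] F)}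
    (hf : ∀ z, HasFDerivAt f (f' z) z) {S : P → C(I, F)} {p : P} (hS : DifferentiableAt ℝ S p)
    (hsol : (fun p => volterra (f.comp (paramCurve P F (p, S p)))) =ᶠ[𝓝 p] S) (h : P) :
    volterra (pointwiseApply (f'.comp (paramCurve P F (p, S p)))
      (paramCurve P F (h, fderiv ℝ S p h))) = fderiv ℝ S p h := by
  have hgraph : HasFDerivAt (fun p => paramCurve P F (p, S p)) _ p :=
    (paramCurve P F).hasFDerivAt.comp p ((hasFDerivAt_id p).prodMk hS.hasFDerivAt)
  have hcomp : HasFDerivAt (fun p => f.comp (paramCurve P F (p, S p))) _ p :=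
    HasFDerivAt.comp (g := f.comp) p (hasFDerivAt_postcomp hf _) hgraph
  have hrhs : HasFDerivAt (fun p => volterra (f.comp (paramCurve P F (p, S p)))) _ p :=
    (volterra (F := F)).hasFDerivAt.comp p hcomp
  exact DFunLike.congr_fun ((hrhs.congr_of_eventuallyEq hsol.symm).unique hS.hasFDerivAt) h

end ParametricODE

section OneForms

variable {E : Type*} [NormedAddCommGroup E] [NormedSpace ℝ E] {α β : E → E →L[ℝ] ℝ} {x : E}

/-- The exterior derivative `dα(a, b) = (D_a α)(b) - (D_b α)(a)` of a one-form `α`, encoded as a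
bilinear form at each point. -/
def oneFormExtDeriv (α : E → E →L[ℝ] ℝ) (x : E) : E →L[ℝ] E →L[ℝ] ℝ :=
  fderiv ℝ α x - (fderiv ℝ α x).flip

lemma oneFormExtDeriv_apply (a b : E) :
    oneFormExtDeriv α x a b = fderiv ℝ α x a b - fderiv ℝ α x b a :=
  rfl

/-- The Frobenius integrability condition `α ∧ dα = 0` at the point `x` for a one-form `α`, with
the wedge product written out on three vectors. -/
def IsFrobeniusAt (α : E → E →L[ℝ] ℝ) (x : E) : Prop :=
  ∀ a b c, α x a * oneFormExtDeriv α x b c + α x b * oneFormExtDeriv α x c a +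
    α x c * oneFormExtDeriv α x a b = 0

lemma IsFrobeniusAt.congr_of_eventuallyEq (hα : IsFrobeniusAt α x) (hβ : β =ᶠ[𝓝 x] α) :
    IsFrobeniusAt β x := by
  simpa only [IsFrobeniusAt, oneFormExtDeriv, hβ.fderiv_eq, hβ.eq_of_nhds] using hα

lemma IsFrobeniusAt.smul (hα : IsFrobeniusAt α x) {q : E → ℝ} (hq : DifferentiableAt ℝ q x)
    (hαd : DifferentiableAt ℝ α x) : IsFrobeniusAt (fun z => q z • α z) x := by
  intro a b c
  have hderiv : ∀ v w, fderiv ℝ (fun z => q z • α z) x v w =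
      q x * fderiv ℝ α x v w + fderiv ℝ q x v * α x w := fun v w => by
    rw [fderiv_fun_smul hq hαd]
    simp
  have habc := hα a b c
  simp only [oneFormExtDeriv_apply, hderiv, FunLike.coe_smul, Pi.smul_apply, smul_eq_mul]
    at habc ⊢
  linear_combination q x ^ 2 * habc

lemma fderiv_apply_eq_zero_of_eventually_apply_eq {e : E} {c : ℝ} (hα : DifferentiableAt ℝ α x)
    (he : ∀ᶠ z in 𝓝 x, α z e = c) (v : E) : fderiv ℝ α x v e = 0 := by
  have happly : fderiv ℝ (fun z => α z e) x v = fderiv ℝ α x v e := by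
    rw [fderiv_clm_apply hα (differentiableAt_const e)]
    simp
  have hconst : (fun z => α z e) =ᶠ[𝓝 x] fun _ => c := he
  rw [← happly, hconst.fderiv_eq]
  simp

/-- Along a variation `X` of a curve `C` tangent to `ker α`, where `hvar` is the variation of the
tangency condition `α(C') = 0`, one has `(α(X))' = dα(C', X)`, and contracting `α ∧ dα = 0` with
`(e, C', X)` gives the linear equation. -/
lemma IsFrobeniusAt.hasDerivWithinAt_apply_variation {C X : ℝ → E} {C' X' e : E} {T : Set ℝ}
    {s : ℝ} (hα : IsFrobeniusAt α (C s)) (hαd : DifferentiableAt ℝ α (C s)) (he : α (C s) e = 1)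
    (hC : HasDerivWithinAt C C' T s) (hX : HasDerivWithinAt X X' T s) (htangent : α (C s) C' = 0)
    (hvar : fderiv ℝ α (C s) (X s) C' + α (C s) X' = 0) :
    HasDerivWithinAt (fun s => α (C s) (X s)) (-oneFormExtDeriv α (C s) e C' • α (C s) (X s))
      T s := by
  have hαC : HasDerivWithinAt (fun s => α (C s)) (fderiv ℝ α (C s) C') T s :=
    hαd.hasFDerivAt.comp_hasDerivWithinAt s hC
  refine (hαC.clm_apply hX).congr_deriv ?_
  have hfrob := hα e C' (X s)
  rw [he, htangent, oneFormExtDeriv_apply C'] at hfrob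
  rw [smul_eq_mul]
  linear_combination hfrob + hvar

end OneForms

lemma eq_exp_integral_smul_of_hasDerivWithinAt {F : Type*} [NormedAddCommGroup F] [NormedSpace ℝ F]
    {a : ℝ → ℝ} {w : ℝ → F} {l r : ℝ} (hlr : l ≤ r) (ha : Continuous a)
    (hw : ∀ s ∈ Icc l r, HasDerivWithinAt w (a s • w s) (Icc l r) s) :
    w r = Real.exp (∫ s in l..r, a s) • w l := by
  have hfactor : ∀ s ∈ Icc l r, HasDerivWithinAt
      (fun s => Real.exp (-∫ τ in l..s, a τ) • w s) 0 (Icc l r) s := fun s hs => by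
    have hA : HasDerivAt (fun s => ∫ τ in l..s, a τ) (a s) s :=
      (ha.integral_hasStrictDerivAt l s).hasDerivAt
    refine (hA.neg.exp.hasDerivWithinAt.smul (hw s hs)).congr_deriv ?_
    module
  have hconst := constant_of_has_deriv_right_zero
    (fun s hs => (hfactor s hs).continuousWithinAt)
    (fun s hs => (hfactor s (Ico_subset_Icc_self hs)).mono_of_mem_nhdsWithin
      (Icc_mem_nhdsGE_of_mem hs)) r (right_mem_Icc.2 hlr)
  rw [integral_same, neg_zero, Real.exp_zero, one_smul] at hconst
  rw [← hconst, smul_smul, ← Real.exp_add, add_neg_cancel, Real.exp_zero, one_smul]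

lemma exists_contDiff_eventuallyEq {E F : Type*} [NormedAddCommGroup E] [NormedSpace ℝ E]
    [HasContDiffBump E] [NormedAddCommGroup F] [NormedSpace ℝ F] {n : ℕ∞} {f : E → F} {x₀ : E}
    (hf : ∀ᶠ x in 𝓝 x₀, ContDiffAt ℝ n f x) :
    ∃ g, ContDiff ℝ n g ∧ g =ᶠ[𝓝 x₀] f := by
  obtain ⟨r, hr, hfr⟩ := Metric.eventually_nhds_iff_ball.1 hf
  let χ : ContDiffBump x₀ := ⟨r / 3, r / 2, by positivity, by linarith⟩
  refine ⟨fun x => χ x • f x, contDiff_iff_contDiffAt.2 fun x => ?_, ?_⟩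
  · by_cases hx : x ∈ tsupport χ
    · rw [χ.tsupport_eq] at hx
      exact χ.contDiffAt.smul (hfr x (Metric.closedBall_subset_ball (half_lt_self hr) hx))
    · refine (contDiffAt_const (c := (0 : F))).congr_of_eventuallyEq ?_
      filter_upwards [notMem_tsupport_iff_eventuallyEq.1 hx] with y hy
      simp [hy]
  · filter_upwards [χ.eventuallyEq_one] with x hx
    simp [hx]

lemma eventually_forall_add_apply {E K : Type*} [NormedAddCommGroup E] [TopologicalSpace K]
    [CompactSpace K] {S : E → C(K, E)} {x₀ : E} {p : E → Prop} (hp : ∀ᶠ z in 𝓝 x₀, p z)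
    (hS : ContinuousAt S x₀) (hS₀ : S x₀ = 0) :
    ∀ᶠ x in 𝓝 x₀, ∀ s, p (x + S x s) := by
  obtain ⟨r, hr, hball⟩ := Metric.eventually_nhds_iff.1 hp
  have hsmall : Tendsto (fun x => ‖x - x₀‖ + ‖S x‖) (𝓝 x₀) (𝓝 0) := by
    have : ContinuousAt (fun x => ‖x - x₀‖ + ‖S x‖) x₀ := by fun_prop
    simpa [ContinuousAt, hS₀] using this
  filter_upwards [hsmall.eventually (gt_mem_nhds hr)] with x hx s
  refine hball (lt_of_le_of_lt ?_ hx)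
  calc dist (x + S x s) x₀ = ‖x - x₀ + S x s‖ := by rw [dist_eq_norm, add_sub_right_comm]
    _ ≤ ‖x - x₀‖ + ‖S x‖ := (norm_add_le _ _).trans (by gcongr; exact (S x).norm_coe_le_norm s)

section Frobenius

variable {E : Type*} [NormedAddCommGroup E] [NormedSpace ℝ E]

/-- For a one-form `γ` with `γ(e) = 1`, the vector `x₀ - x` corrected by a multiple of `e` so that
it lies in `ker γ` at the point `x + u`. As a function of `(x, u)` it is the right-hand side of the
differential equation for the displacement `u` of the curve tangent to `ker γ` that leads from `x`
to the axis `x₀ + ℝ e` within the plane through `x` and the axis. -/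
def axisField (γ : C(E, E →L[ℝ] ℝ)) (e x₀ : E) : C(E × E, E) where
  toFun q := γ (q.1 + q.2) (q.1 - x₀) • e - (q.1 - x₀)

variable {γ : C(E, E →L[ℝ] ℝ)} {e x₀ x : E} {S : E → C(I, E)}

lemma axisField_apply (q : E × E) :
    axisField γ e x₀ q = γ (q.1 + q.2) (q.1 - x₀) • e - (q.1 - x₀) :=
  rfl

lemma contDiff_axisField {n : ℕ∞ω} (hγ : ContDiff ℝ n γ) : ContDiff ℝ n (axisField γ e x₀) := by
  change ContDiff ℝ n fun q : E × E => γ (q.1 + q.2) (q.1 - x₀) • e - (q.1 - x₀)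
  fun_prop

lemma fderiv_axisField_apply (hγ : ContDiff ℝ 1 γ) (q v : E × E) :
    fderiv ℝ (axisField γ e x₀) q v =
      (fderiv ℝ γ (q.1 + q.2) (v.1 + v.2) (q.1 - x₀) + γ (q.1 + q.2) v.1) • e - v.1 := by
  have hsub : HasFDerivAt (fun q : E × E => q.1 - x₀) (.fst ℝ E E) q :=
    hasFDerivAt_fst.sub_const x₀
  have hcomp : HasFDerivAt (fun q : E × E => γ (q.1 + q.2)) _ q :=
    HasFDerivAt.comp (g := γ) q (hγ.differentiable one_ne_zero _).hasFDerivAt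
      (hasFDerivAt_fst.add hasFDerivAt_snd)
  have hfield : HasFDerivAt (axisField γ e x₀) _ q :=
    ((hcomp.clm_apply hsub).smul_const e).sub hsub
  rw [hfield.fderiv]
  simp [add_comm]

lemma apply_axisField {q : E × E} (he : γ (q.1 + q.2) e = 1) :
    γ (q.1 + q.2) (axisField γ e x₀ q) = 0 := by
  simp [axisField_apply, he]

lemma exists_add_eq_add_smul_of_volterra_axisField [CompleteSpace E] {u : C(I, E)}
    (hu : volterra ((axisField γ e x₀).comp (paramCurve E E (x, u))) = u) :
    ∃ c : ℝ, x + u 1 = x₀ + c • e := by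
  have hcont : Continuous fun τ : ℝ => γ (x + IccExtend zero_le_one u τ) (x - x₀) := by
    have := continuous_IccExtend_unitInterval u
    fun_prop
  refine ⟨∫ τ in (0 : ℝ)..1, γ (x + IccExtend zero_le_one u τ) (x - x₀), ?_⟩
  have hu1 : u 1 = ∫ τ in (0 : ℝ)..1,
      (γ (x + IccExtend zero_le_one u τ) (x - x₀) • e - (x - x₀)) :=
    (DFunLike.congr_fun hu 1).symm
  have hint : IntervalIntegrable (fun τ => γ (x + IccExtend zero_le_one u τ) (x - x₀) • e)
      MeasureTheory.volume 0 1 := (hcont.smul continuous_const).intervalIntegrable _ _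
  rw [hu1, integral_sub hint intervalIntegrable_const, intervalIntegral.integral_smul_const,
    integral_const]
  module

lemma hasDerivWithinAt_apply_add (hγ : ContDiff ℝ 1 γ) {u y : ℝ → E} {h : E} {T : Set ℝ} {s : ℝ}
    (he : ∀ᶠ z in 𝓝 (x + u s), γ z e = 1) (hfrob : IsFrobeniusAt γ (x + u s))
    (hu : HasDerivWithinAt u (axisField γ e x₀ (x, u s)) T s)
    (hy : HasDerivWithinAt y (fderiv ℝ (axisField γ e x₀) (x, u s) (h, y s)) T s) :
    HasDerivWithinAt (fun s => γ (x + u s) (h + y s))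
      (-oneFormExtDeriv γ (x + u s) e (axisField γ e x₀ (x, u s)) • γ (x + u s) (h + y s)) T s := by
  have hγd : DifferentiableAt ℝ γ (x + u s) := hγ.differentiable one_ne_zero _
  refine hfrob.hasDerivWithinAt_apply_variation hγd he.self_of_nhds (hu.const_add x)
    (hy.const_add h) (apply_axisField (q := (x, u s)) he.self_of_nhds) ?_
  simp only [axisField_apply, fderiv_axisField_apply hγ, he.self_of_nhds,
    fderiv_apply_eq_zero_of_eventually_apply_eq hγd he, map_add, map_sub, map_smul, add_apply,
    smul_eq_mul]
  ring

lemma exists_apply_add_eq_mul [CompleteSpace E] (hγ : ContDiff ℝ 1 γ) {u : C(I, E)}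
    (hu : volterra ((axisField γ e x₀).comp (paramCurve E E (x, u))) = u)
    (he : ∀ s, ∀ᶠ z in 𝓝 (x + u s), γ z e = 1) (hfrob : ∀ s, IsFrobeniusAt γ (x + u s)) :
    ∃ c : ℝ, c ≠ 0 ∧ ∀ (h : E) (k y : C(I, E)), volterra k = y →
      (∀ s, k s = fderiv ℝ (axisField γ e x₀) (x, u s) (h, y s)) →
      γ (x + u 1) (h + y 1) = c * γ x h := by
  let curve (v : C(I, E)) : ℝ → E := IccExtend zero_le_one v
  have hcurve : ∀ (v : C(I, E)) s (hs : s ∈ Icc (0 : ℝ) 1), v ⟨s, hs⟩ = curve v s := fun v s hs =>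
    (IccExtend_of_mem _ _ hs).symm
  have hcurve0 : ∀ v, curve v 0 = v 0 := fun v => (hcurve v 0 (by simp)).symm
  have hcurve1 : ∀ v, curve v 1 = v 1 := fun v => (hcurve v 1 (by simp)).symm
  let a : ℝ → ℝ := fun s =>
    -oneFormExtDeriv γ (x + curve u s) e (axisField γ e x₀ (x, curve u s))
  have ha : Continuous a := by
    have huc : Continuous (curve u) := continuous_IccExtend_unitInterval u
    have := (hγ.continuous_fderiv one_ne_zero).comp (huc.const_add x)
    simp only [a, oneFormExtDeriv_apply]
    fun_prop
  refine ⟨Real.exp (∫ s in (0 : ℝ)..1, a s), (Real.exp_pos _).ne', fun h k y hy hk => ?_⟩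
  have hlinear : ∀ s ∈ Icc (0 : ℝ) 1, HasDerivWithinAt (fun s => γ (x + curve u s) (h + curve y s))
      (a s • γ (x + curve u s) (h + curve y s)) (Icc 0 1) s := fun s hs => by
    refine hasDerivWithinAt_apply_add hγ ?_ ?_ ?_ ?_
    · simpa only [hcurve] using he ⟨s, hs⟩
    · simpa only [hcurve] using hfrob ⟨s, hs⟩
    · rw [← hcurve u s hs]
      exact hasDerivWithinAt_of_volterra_eq hu hs
    · simpa only [hk, hcurve] using hasDerivWithinAt_of_volterra_eq hy hs
  simpa only [hcurve0, hcurve1, apply_zero_of_volterra_eq hu, apply_zero_of_volterra_eq hy,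
    add_zero, smul_eq_mul] using eq_exp_integral_smul_of_hasDerivWithinAt zero_le_one ha hlinear

lemma exists_apply_fderiv_eq_mul [CompleteSpace E] (hγ : ContDiff ℝ 1 γ)
    (hS : DifferentiableAt ℝ S x)
    (hsol : (fun x => volterra ((axisField γ e x₀).comp (paramCurve E E (x, S x)))) =ᶠ[𝓝 x] S)
    (he : ∀ s, ∀ᶠ z in 𝓝 (x + S x s), γ z e = 1) (hfrob : ∀ s, IsFrobeniusAt γ (x + S x s)) :
    ∃ c : ℝ, c ≠ 0 ∧ ∀ h, γ (x + S x 1) (h + fderiv ℝ S x h 1) = c * γ x h := by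
  obtain ⟨c, hc, hγc⟩ := exists_apply_add_eq_mul hγ hsol.self_of_nhds he hfrob
  have hfield := contDiff_axisField (e := e) (x₀ := x₀) hγ
  let f' : C(E × E, E × E →L[ℝ] E) :=
    ⟨fderiv ℝ (axisField γ e x₀), hfield.continuous_fderiv one_ne_zero⟩
  exact ⟨c, hc, fun h => hγc h _ _ (fderiv_ode_solution (f' := f')
    (fun q => (hfield.differentiable one_ne_zero q).hasFDerivAt) hS hsol h) fun s => rfl⟩

lemma add_fderiv_apply_one_eq_smul {H : E → ℝ} (hS : DifferentiableAt ℝ S x)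
    (hH : DifferentiableAt ℝ H x) (haxis : ∀ᶠ z in 𝓝 x, z + S z 1 = x₀ + H z • e) (h : E) :
    h + fderiv ℝ S x h 1 = fderiv ℝ H x h • e := by
  have hleft : HasFDerivAt (fun x => x + S x 1) _ x :=
    (hasFDerivAt_id x).add
      ((ContinuousMap.evalCLM ℝ 1 : C(I, E) →L[ℝ] E).hasFDerivAt.comp x hS.hasFDerivAt)
  have hright : HasFDerivAt (fun x => x₀ + H x • e) _ x :=
    (hH.hasFDerivAt.smul_const e).const_add x₀
  exact DFunLike.congr_fun (hleft.unique (hright.congr_of_eventuallyEq haxis)) h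

theorem exists_potential_of_apply_eq_one [CompleteSpace E] (hγ : ContDiff ℝ ∞ γ)
    (he : ∀ᶠ z in 𝓝 x₀, γ z e = 1) (hfrob : ∀ᶠ z in 𝓝 x₀, IsFrobeniusAt γ z) :
    ∃ H : E → ℝ, ∀ᶠ x in 𝓝 x₀, ContDiffAt ℝ ∞ H x ∧ fderiv ℝ H x e ≠ 0 ∧
      fderiv ℝ H x = fderiv ℝ H x e • γ x := by
  have hfield₀ : ∀ u, axisField γ e x₀ (x₀, u) = 0 := fun u => by simp [axisField_apply]
  obtain ⟨S, hS₀, hS⟩ :=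
    exists_contDiffAt_ode_solution (contDiff_axisField hγ) (by simp) hfield₀
  have hSc : ContinuousAt S x₀ := hS.self_of_nhds.1.continuousAt
  let H : E → ℝ := fun x => γ x₀ (x + S x 1 - x₀)
  refine ⟨H, ?_⟩
  have haxis : ∀ᶠ x in 𝓝 x₀, x + S x 1 = x₀ + H x • e := by
    filter_upwards [hS] with x hx
    obtain ⟨c, hc⟩ := exists_add_eq_add_smul_of_volterra_axisField hx.2
    have hHc : H x = c := by
      simp only [H, hc, add_sub_cancel_left, map_smul, he.self_of_nhds, smul_eq_mul, mul_one]
    rw [hc, hHc]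
  filter_upwards [hS.eventually_nhds, haxis.eventually_nhds, he,
    eventually_forall_add_apply he.eventually_nhds hSc hS₀,
    eventually_forall_add_apply hfrob hSc hS₀] with x hSx haxisx hex heS hfrobS
  have hSd : DifferentiableAt ℝ S x := hSx.self_of_nhds.1.differentiableAt (by simp)
  have hend : ContDiffAt ℝ ∞ (fun x => x + S x 1) x :=
    contDiffAt_id.add
      ((ContinuousMap.evalCLM ℝ 1 : C(I, E) →L[ℝ] E).contDiff.contDiffAt.comp x
        hSx.self_of_nhds.1)
  have hHx : ContDiffAt ℝ ∞ H x :=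
    (γ x₀).contDiff.contDiffAt.comp x (hend.sub contDiffAt_const)
  obtain ⟨c, hc, hγc⟩ := exists_apply_fderiv_eq_mul (hγ.of_le (by simp)) hSd
    (hSx.mono fun _ h => h.2) heS hfrobS
  have hdH : ∀ h, fderiv ℝ H x h = c * γ x h := fun h => by
    rw [← hγc h, add_fderiv_apply_one_eq_smul hSd (hHx.differentiableAt (by simp)) haxisx,
      map_smul, (heS 1).self_of_nhds, smul_eq_mul, mul_one]
  have hdHe : fderiv ℝ H x e = c := by rw [hdH, hex, mul_one]
  refine ⟨hHx, hdHe ▸ hc, ?_⟩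
  ext h
  simp [hdHe, hdH]

theorem exists_eq_smul_fderiv_of_isFrobeniusAt [CompleteSpace E] [HasContDiffBump E]
    {α : E → E →L[ℝ] ℝ} (hα : ∀ᶠ x in 𝓝 x₀, ContDiffAt ℝ ∞ α x)
    (hfrob : ∀ᶠ x in 𝓝 x₀, IsFrobeniusAt α x) (hα₀ : α x₀ ≠ 0) :
    ∃ φ H : E → ℝ, ∀ᶠ x in 𝓝 x₀, ContDiffAt ℝ ∞ φ x ∧ ContDiffAt ℝ ∞ H x ∧ φ x ≠ 0 ∧
      α x = φ x • fderiv ℝ H x := by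
  obtain ⟨e, he₀⟩ : ∃ e, α x₀ e ≠ 0 := by simpa using DFunLike.ne_iff.1 hα₀
  have hαe : ∀ᶠ x in 𝓝 x₀, ContDiffAt ℝ ∞ (fun z => α z e) x :=
    hα.mono fun x hx => hx.clm_apply contDiffAt_const
  have he : ∀ᶠ x in 𝓝 x₀, α x e ≠ 0 := hαe.self_of_nhds.continuousAt.eventually_ne he₀
  have hnorm : ∀ᶠ x in 𝓝 x₀, ContDiffAt ℝ ∞ (fun z => (α z e)⁻¹ • α z) x := by
    filter_upwards [hα, hαe, he] with x hαx hαex hex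
    exact (hαex.inv hex).smul hαx
  obtain ⟨γ, hγ, hγα⟩ := exists_contDiff_eventuallyEq hnorm
  have hγe : ∀ᶠ x in 𝓝 x₀, γ x e = 1 := by
    filter_upwards [hγα, he] with x hx hex
    simp [hx, hex]
  have hγfrob : ∀ᶠ x in 𝓝 x₀, IsFrobeniusAt γ x := by
    filter_upwards [hγα.eventually_nhds, hα, hαe, he, hfrob] with x hx hαx hαex hex hfrobx
    exact (hfrobx.smul ((hαex.inv hex).differentiableAt (by simp))
      (hαx.differentiableAt (by simp))).congr_of_eventuallyEq hx
  obtain ⟨H, hH⟩ :=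
    exists_potential_of_apply_eq_one (γ := ⟨γ, hγ.continuous⟩) hγ hγe hγfrob
  refine ⟨fun x => α x e / fderiv ℝ H x e, H, ?_⟩
  filter_upwards [hH, hαe, he, hγα] with x ⟨hHx, hHe, hdH⟩ hαex hex hγx
  refine ⟨hαex.div ((hHx.fderiv_right (by simp)).clm_apply contDiffAt_const) hHe, hHx,
    div_ne_zero hex hHe, ?_⟩
  calc α x = (α x e / fderiv ℝ H x e) • fderiv ℝ H x e • γ x := by
        rw [hγx, smul_smul, smul_smul, div_mul_cancel₀ _ hHe, mul_inv_cancel₀ hex, one_smul]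
    _ = (α x e / fderiv ℝ H x e) • fderiv ℝ H x := congrArg _ hdH.symm

end Frobenius

section Euclidean

variable {J : E3 → E3} {x : E3}

lemma inner_eq_dot (u v : E3) : inner ℝ u v = dot u v := by
  simp [dot, PiLp.inner_apply, mul_comm]

lemma fderiv_apply_eq_sum_pd (f : E3 → ℝ) (x a : E3) :
    fderiv ℝ f x a = ∑ i, a i * pd i f x := by
  conv_lhs => rw [← (EuclideanSpace.basisFun (Fin 3) ℝ).sum_repr a]
  simp [pd]

lemma innerSL_grad (f : E3 → ℝ) (x : E3) : innerSL ℝ (grad f x) = fderiv ℝ f x := by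
  ext a
  rw [innerSL_apply_apply, inner_eq_dot, fderiv_apply_eq_sum_pd]
  simp [dot, grad, Fin.sum_univ_three, mul_comm]

lemma fderiv_innerSL_apply (hJ : DifferentiableAt ℝ J x) (a c : E3) :
    fderiv ℝ (fun z => innerSL ℝ (J z)) x a c = ∑ k, ∑ i, a i * pd i (fun z => J z k) x * c k := by
  have hcomp : ∀ k, fderiv ℝ (fun z => J z k) x a = fderiv ℝ J x a k := fun k => by
    have : HasFDerivAt (fun z => J z k) _ x :=
      (EuclideanSpace.proj k : E3 →L[ℝ] ℝ).hasFDerivAt.comp x hJ.hasFDerivAt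
    rw [this.fderiv]
    rfl
  have hinner : HasFDerivAt (fun z => innerSL ℝ (J z)) _ x :=
    (innerSL ℝ : E3 →L[ℝ] E3 →L[ℝ] ℝ).hasFDerivAt.comp x hJ.hasFDerivAt
  rw [hinner.fderiv]
  simp only [← Finset.sum_mul, ← fderiv_apply_eq_sum_pd, hcomp]
  exact inner_eq_dot _ _

lemma oneFormExtDeriv_innerSL_apply (hJ : DifferentiableAt ℝ J x) (a c : E3) :
    oneFormExtDeriv (fun z => innerSL ℝ (J z)) x a c = dot (curl J x) (cross a c) := by
  rw [oneFormExtDeriv_apply, fderiv_innerSL_apply hJ, fderiv_innerSL_apply hJ]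
  simp only [dot, curl, cross, Fin.sum_univ_three, WithLp.equiv_symm_apply, Matrix.cons_val]
  ring

lemma isFrobeniusAt_innerSL (hJ : DifferentiableAt ℝ J x) (hjac : dot (J x) (curl J x) = 0) :
    IsFrobeniusAt (fun z => innerSL ℝ (J z)) x := by
  intro a b c
  simp only [oneFormExtDeriv_innerSL_apply hJ, innerSL_apply_apply, inner_eq_dot]
  simp only [dot, cross, Fin.sum_univ_three, WithLp.equiv_symm_apply, PiLp.toLp_apply,
    Matrix.cons_val] at hjac ⊢
  -- The left-hand side is `det(a, b, c)` times `J · curl J`.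
  linear_combination (a 0 * (b 1 * c 2 - b 2 * c 1) + a 1 * (b 2 * c 0 - b 0 * c 2)
    + a 2 * (b 0 * c 1 - b 1 * c 0)) * hjac

theorem local_potential_of_poisson_vector_general {U : Set E3} (hU : IsOpen U)
    (hJ : ContDiffOn ℝ ∞ J U) (hjac : ∀ x ∈ U, dot (J x) (curl J x) = 0) {x₀ : E3} (hx₀ : x₀ ∈ U)
    (hJ₀ : J x₀ ≠ 0) :
    ∃ V : Set E3, IsOpen V ∧ x₀ ∈ V ∧ V ⊆ U ∧ ∃ φ H : E3 → ℝ,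
      ContDiffOn ℝ ∞ φ V ∧ ContDiffOn ℝ ∞ H V ∧ (∀ x ∈ V, φ x ≠ 0) ∧
      ∀ x ∈ V, J x = φ x • grad H x := by
  have hxU : ∀ᶠ x in 𝓝 x₀, x ∈ U := hU.mem_nhds hx₀
  have hJU : ∀ x ∈ U, ContDiffAt ℝ ∞ J x := fun x hx => hJ.contDiffAt (hU.mem_nhds hx)
  obtain ⟨φ, H, hφH⟩ := exists_eq_smul_fderiv_of_isFrobeniusAt
    (α := fun z => innerSL ℝ (J z)) (x₀ := x₀)
    (hxU.mono fun x hx => (innerSL ℝ : E3 →L[ℝ] E3 →L[ℝ] ℝ).contDiff.contDiffAt.comp x (hJU x hx))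
    (hxU.mono fun x hx => isFrobeniusAt_innerSL ((hJU x hx).differentiableAt (by simp)) (hjac x hx))
    (by simpa [← norm_eq_zero] using hJ₀)
  obtain ⟨V, hV, hVo, hx₀V⟩ := eventually_nhds_iff.1 (hxU.and hφH)
  refine ⟨V, hVo, hx₀V, fun x hx => (hV x hx).1, φ, H,
    fun x hx => (hV x hx).2.1.contDiffWithinAt, fun x hx => (hV x hx).2.2.1.contDiffWithinAt,
    fun x hx => (hV x hx).2.2.2.1, fun x hx => ?_⟩
  have hJx := (hV x hx).2.2.2.2
  rw [← innerSL_grad, ← map_smul] at hJx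
  exact (innerSL_inj ..).1 hJx

end Euclidean

section Frame

variable {t n b : E3 → E3} {U : Set E3} {μ : E3 → ℝ}

lemma IsFrameOn.contDiffOn_add_smul (hframe : IsFrameOn t n b U) (hμ : ContDiffOn ℝ ∞ μ U) :
    ContDiffOn ℝ ∞ (fun y => n y + μ y • b y) U :=
  hframe.2.1.add (hμ.smul hframe.2.2.1)

lemma IsFrameOn.add_smul_ne_zero (hframe : IsFrameOn t n b U) {x : E3} (hx : x ∈ U) (c : ℝ) :
    n x + c • b x ≠ 0 := by
  obtain ⟨-, hnx, -, -, -, hnb, -⟩ := hframe.2.2.2 x hx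
  have hinner : inner ℝ (n x) (n x + c • b x) = 1 := by
    rw [inner_add_right, inner_smul_right, real_inner_self_eq_norm_sq, hnx, inner_eq_dot, hnb]
    norm_num
  intro hzero
  simp [hzero] at hinner

end Frame

/-- if J = n + μb satisfies the Jacobi identity, then locally
J = φ∇H for some smooth functions φ (nowhere zero) and H. -/
theorem local_potential_of_poisson_vector
    (U : Set E3) (hU : IsOpen U) (t n b : E3 → E3)
    (hframe : IsFrameOn t n b U)
    (μ : E3 → ℝ) (hμ : ContDiffOn ℝ (⊤ : ℕ∞) μ U)
    (hjac : ∀ x ∈ U, dot (n x + μ x • b x)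
        (curl (fun y => n y + μ y • b y) x) = 0) :
    ∀ x₀ ∈ U, ∃ V : Set E3, IsOpen V ∧ x₀ ∈ V ∧ V ⊆ U ∧
      ∃ φ H : E3 → ℝ,
        ContDiffOn ℝ (⊤ : ℕ∞) φ V ∧ ContDiffOn ℝ (⊤ : ℕ∞) H V ∧
        (∀ x ∈ V, φ x ≠ 0) ∧
        (∀ x ∈ V, n x + μ x • b x = φ x • grad H x) := by
  intro x₀ hx₀
  exact local_potential_of_poisson_vector_general hU (hframe.contDiffOn_add_smul hμ) hjac hx₀
    (hframe.add_smul_ne_zero hx₀ _)
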